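/- Let Δ be a simplicial complex over a field k and suppose J ⊆ V(Δ) is an independent set for Δ. Then depth k[ast_Δ(J)] ≥ depth k[Δ] − 1. -/

import Mathlib

open Finset

/-- An abstract simplicial complex on vertex type `V`, given by a finite, downward closed
family of finite subsets of `V` (its faces). -/
structure SComplex (V : Type) [DecidableEq V] where
  faces : Finset (Finset V)
  down_closed : ∀ ⦃s t : Finset V⦄, s ∈ faces → t ⊆ s → t ∈ faces

namespace SComplex

variable {V : Type} [DecidableEq V]

/-- `K.rank = d = dim k[Δ] = dim Δ + 1` is the maximal cardinality of a face of `K`. -/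
def rank (K : SComplex V) : ℕ := K.faces.sup Finset.card

/-- `F` is a facet (maximal face) of `K`. -/
def IsFacet (K : SComplex V) (F : Finset V) : Prop :=
  F ∈ K.faces ∧ ∀ G ∈ K.faces, F ⊆ G → F = G

/-- `K` is pure: all facets have the maximal cardinality `K.rank`. -/
def Pure (K : SComplex V) : Prop := ∀ F : Finset V, K.IsFacet F → F.card = K.rank

/-- The link `lk_K(T) = {G ∈ K | T ∪ G ∈ K, T ∩ G = ∅}`. -/
def link (K : SComplex V) (T : Finset V) : SComplex V where
  faces := K.faces.filter fun G => Disjoint T G ∧ T ∪ G ∈ K.faces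
  down_closed := by
    intro s t hs hts
    simp only [Finset.mem_filter] at hs ⊢
    exact ⟨K.down_closed hs.1 hts, hs.2.1.mono_right hts,
      K.down_closed hs.2.2 (Finset.union_subset_union_right hts)⟩

/-- The anti-star `ast_K(T) = {G ∈ K | T ∩ G = ∅}`. -/
def antistar (K : SComplex V) (T : Finset V) : SComplex V where
  faces := K.faces.filter fun G => Disjoint T G
  down_closed := by
    intro s t hs hts
    simp only [Finset.mem_filter] at hs ⊢
    exact ⟨K.down_closed hs.1 hts, hs.2.mono_right hts⟩

/-- The induced subcomplex of `K` on a set `W` of vertices. -/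
def restrict (K : SComplex V) (W : Finset V) : SComplex V where
  faces := K.faces.filter fun G => G ⊆ W
  down_closed := by
    intro s t hs hts
    simp only [Finset.mem_filter] at hs ⊢
    exact ⟨K.down_closed hs.1 hts, hts.trans hs.2⟩

/-- The subcomplex of faces of cardinality at most `m`; as cardinality = dimension + 1, this is
the `(m-1)`-skeleton `Δ^{(m-1)}`. -/
def skelCard (K : SComplex V) (m : ℕ) : SComplex V where
  faces := K.faces.filter fun G => G.card ≤ m
  down_closed := by
    intro s t hs hts
    simp only [Finset.mem_filter] at hs ⊢
    exact ⟨K.down_closed hs.1 hts, le_trans (Finset.card_le_card hts) hs.2⟩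

/-- `K.trunc j` is `[Δ]_{>j}`, the order complex of the poset of faces of `K` of cardinality
(equivalently, of height in the face poset) `> j`: its faces are the chains of such faces.
For `j = 0` this is the barycentric subdivision of `K`. -/
def trunc (K : SComplex V) (j : ℕ) : SComplex (Finset V) where
  faces := K.faces.powerset.filter fun C =>
    (∀ s ∈ C, j < s.card) ∧ ∀ s ∈ C, ∀ t ∈ C, s ⊆ t ∨ t ⊆ s
  down_closed := by
    intro s t hs hts
    simp only [Finset.mem_powerset, Finset.mem_filter] at hs ⊢
    exact ⟨hts.trans hs.1, fun a ha => hs.2.1 a (hts ha),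
      fun a ha b hb => hs.2.2 a (hts ha) b (hts hb)⟩

/-- `Δ_A`: the complex obtained from `K` by deleting all faces containing a member of `A`. -/
def deleteAbove (K : SComplex V) (A : Finset (Finset V)) : SComplex V where
  faces := K.faces.filter fun s => ∀ τ ∈ A, ¬ τ ⊆ s
  down_closed := by
    intro s t hs hts
    simp only [Finset.mem_filter] at hs ⊢
    exact ⟨K.down_closed hs.1 hts, fun τ hτ hsub => hs.2 τ hτ (hsub.trans hts)⟩

/-- The number of faces of `K` of cardinality `i`, i.e. the face number `f_{i-1}(K)`. -/
def faceCount (K : SComplex V) (i : ℕ) : ℕ := (K.faces.filter fun s => s.card = i).card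

/-- The Euler characteristic `χ(K) = Σ_{i ≥ 0} (-1)^i f_i(K)`. -/
def eulerChar (K : SComplex V) : ℤ :=
  ∑ s ∈ K.faces.filter (fun s => s ≠ ∅), (-1 : ℤ) ^ (s.card - 1)

/-- The reduced Euler characteristic `χ̃(K) = χ(K) - 1`. -/
def reducedEulerChar (K : SComplex V) : ℤ := eulerChar K - 1

end SComplex

/-! ### Simplicial homology with coefficients in a field `k` -/

/-- An arbitrary linear order on a finite type. -/
noncomputable def arbOrder (V : Type) [Fintype V] : LinearOrder V :=
  LinearOrder.lift' (Fintype.equivFin V) (Equiv.injective _)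

namespace SComplex

variable {V : Type} [DecidableEq V]

/-- The faces of `K` of cardinality `n`, as a type. -/
def Faces (K : SComplex V) (n : ℕ) : Type :=
  {s : Finset V // s ∈ K.faces ∧ s.card = n}

/-- The space of reduced simplicial `n`-chains of `K`: formal `k`-linear combinations of the
faces of cardinality `n` (such a face has dimension `n - 1`; the empty face sits in degree `0`,
which produces *reduced* homology). -/
abbrev ChainsOf (k : Type) [Field k] (K : SComplex V) (n : ℕ) : Type := Faces K n →₀ k

variable (k : Type) [Field k] [Fintype V]

/-- The simplicial boundary map, with signs determined by an arbitrary but fixed linear order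
on the vertices. -/
noncomputable def bd (K : SComplex V) (n : ℕ) :
    ChainsOf k K n →ₗ[k] ChainsOf k K (n - 1) :=
  letI : LinearOrder V := arbOrder V
  Finsupp.lsum k fun s : Faces K n =>
    LinearMap.toSpanSingleton k (ChainsOf k K (n - 1))
      (∑ x ∈ s.1.attach,
        ((-1 : k) ^ (s.1.filter (fun y => y < x.1)).card) •
          Finsupp.single
            (⟨s.1.erase x.1,
              K.down_closed s.2.1 (Finset.erase_subset _ _),
              by rw [Finset.card_erase_of_mem x.2, s.2.2]⟩ : Faces K (n - 1))
            (1 : k))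

/-- `HVanish k K i` says that the reduced simplicial homology `H̃_{i-1}(K; k)` vanishes.
Note the indexing convention: the index `i` is the *cardinality* of the relevant faces, so this
is reduced homology in topological degree `i - 1`; e.g. `HVanish k K 1` says `H̃₀(K; k) = 0`
(`K` is connected and nonempty) and `HVanish k K 0` says `H̃₋₁(K; k) = 0` (`K` has a face).
Since the cycles in degree `i - 1` are `ker ∂ᵢ` and the boundaries are `im ∂ᵢ₊₁`, and the
boundaries are always contained in the cycles, vanishing of homology says exactly that every
cycle is a boundary. -/
def HVanish (K : SComplex V) (i : ℕ) : Prop :=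
  LinearMap.ker (bd k K i) ≤ LinearMap.range (bd k K (i + 1))

/-- `redHomologyRank k K i` is the dimension `dim_k H̃_{i-1}(K; k)` of the reduced simplicial
homology of `K` in topological degree `i - 1` (cardinality index `i`), namely the dimension of
the cycles `ker ∂ᵢ` modulo the boundaries `im ∂ᵢ₊₁`. -/
noncomputable def redHomologyRank (K : SComplex V) (i : ℕ) : ℕ :=
  Module.finrank k ↥(LinearMap.ker (bd k K i)) -
    Module.finrank k ↥(LinearMap.range (bd k K (i + 1)) ⊓ LinearMap.ker (bd k K i))

end SComplex

/-! ### Depth, Serre conditions, and Stanley–Reisner rings -/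

/-- The length of a longest regular sequence on `R` contained in the ideal `I`
(the `I`-depth of `R`). -/
noncomputable def depthIn (R : Type) [CommRing R] (I : Ideal R) : ℕ :=
  sSup {n : ℕ | ∃ rs : List R, rs.length = n ∧ (∀ r ∈ rs, r ∈ I) ∧
    RingTheory.Sequence.IsRegular R rs}

/-- Serre's condition `(S_ℓ)` for a commutative ring:
`depth R_p ≥ min {ℓ, dim R_p}` for every prime `p`. -/
def SerreCondS (ℓ : ℕ) (R : Type) [CommRing R] : Prop :=
  ∀ (p : Ideal R) (hp : p.IsPrime),
    haveI := hp
    min ((ℓ : ℕ∞) : WithBot ℕ∞) (ringKrullDim (Localization.AtPrime p)) ≤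
      ((depthIn (Localization.AtPrime p)
        (IsLocalRing.maximalIdeal (Localization.AtPrime p)) : ℕ∞) : WithBot ℕ∞)

namespace SComplex

variable {V : Type} [DecidableEq V] (k : Type) [Field k]

/-- The Stanley–Reisner ideal of `K`: generated by the squarefree monomials supported on
non-faces. -/
noncomputable def srIdeal (K : SComplex V) : Ideal (MvPolynomial V k) :=
  Ideal.span ((fun s : Finset V => ∏ v ∈ s, MvPolynomial.X v) '' {s : Finset V | s ∉ K.faces})

/-- The Stanley–Reisner ring `k[Δ]`. -/
noncomputable abbrev SRRing (K : SComplex V) : Type := MvPolynomial V k ⧸ srIdeal k K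

/-- `depth k[Δ]`: the depth of the Stanley–Reisner ring with respect to its irrelevant
(graded maximal) ideal. -/
noncomputable def srDepth (K : SComplex V) : ℕ :=
  depthIn (SRRing k K)
    (Ideal.span (Set.range fun v : V => Ideal.Quotient.mk (srIdeal k K) (MvPolynomial.X v)))

/-- `k[Δ]` satisfies Serre's condition `(S_ℓ)`. -/
def SerreS (ℓ : ℕ) (K : SComplex V) : Prop := SerreCondS ℓ (SRRing k K)

end SComplex

/-! ### Order complexes of finite posets -/

/-- The order complex `O(P)` of a finite poset: its faces are the chains of `P`. -/
def orderComplex (P : Type) [DecidableEq P] [Fintype P] [PartialOrder P]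
    [∀ a b : P, Decidable (a ≤ b)] : SComplex P where
  faces := Finset.univ.filter fun C : Finset P => ∀ a ∈ C, ∀ b ∈ C, a ≤ b ∨ b ≤ a
  down_closed := by
    intro s t hs hts
    simp only [Finset.mem_filter, Finset.mem_univ, true_and] at hs ⊢
    exact fun a ha b hb => hs a (hts ha) b (hts hb)

/-- The height of an element of a finite poset: the maximal cardinality of a chain with top
element `p` (so minimal elements have height `1`). -/
def pheight {P : Type} [DecidableEq P] [Fintype P] [PartialOrder P]
    [∀ a b : P, Decidable (a ≤ b)] (p : P) : ℕ :=
  Finset.sup (Finset.univ.filter fun C : Finset P =>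
    p ∈ C ∧ (∀ a ∈ C, a ≤ p) ∧ ∀ a ∈ C, ∀ b ∈ C, a ≤ b ∨ b ≤ a) Finset.card

/-- The height `ht P` of a finite poset: the maximal cardinality of a chain. -/
def pheightMax (P : Type) [DecidableEq P] [Fintype P] [PartialOrder P]
    [∀ a b : P, Decidable (a ≤ b)] : ℕ :=
  Finset.univ.sup (pheight (P := P))

/-- `O(P_{>j})`: the full subcomplex of the order complex on the elements of height `> j`. -/
def ocAbove (P : Type) [DecidableEq P] [Fintype P] [PartialOrder P]
    [∀ a b : P, Decidable (a ≤ b)] (j : ℕ) : SComplex P :=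
  (orderComplex P).restrict (Finset.univ.filter fun p => j < pheight p)

/-- The face poset `F(Δ)` of a simplicial complex: the nonempty faces, ordered by inclusion. -/
abbrev SComplex.FacePoset {V : Type} [DecidableEq V] (K : SComplex V) : Type :=
  {s : Finset V // s ∈ K.faces ∧ s ≠ ∅}

instance {V : Type} [DecidableEq V] (K : SComplex V) :
    ∀ a b : K.FacePoset, Decidable (a ≤ b) := fun a b =>
  decidable_of_iff (a.1 ≤ b.1) Subtype.coe_le_coe

/-!
Let `A = k[Δ]`, `B = k[ast_Δ(J)]`, let `I` be the irrelevant ideal of `B`, and let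
`y = ∑ a ∈ J, x_a`. As `J` is independent, `x_v ^ 2 = x_v y` in `A` for `v ∈ J`, so the irrelevant
ideal of `A` lies in the radical of `I A + (y)`. By Rees' theorem the grade of an ideal depends only
on its radical, hence `I A + (y)` contains an `A`-regular sequence of length `depth A`.

Now suppose that `𝔟` is generated by an `A`-regular sequence in `I` of length at most `depth A - 2`.
Then `I A + (y)` contains a regular sequence `x, s` on `A / 𝔟 A`, which forces the `I`-torsion of
`A / 𝔟 A` to be divisible by `y`. But `A / 𝔟 A` is graded by the degree in the variables from `J`,
and `y` has positive degree, so this torsion is zero and `I` contains an `(A / 𝔟 A)`-regular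
element by prime avoidance. Inductively, `I` contains an `A`-regular sequence of length
`depth A - 1`. It is also `B`-regular since `B` is a direct summand of `A`.
-/

/-! ### Grade and Ext -/

section RegularSequences

open CategoryTheory.Abelian RingTheory.Sequence
open scoped Pointwise

/-- The grade of `I` on `M` is at least `n`: some `M`-regular sequence of length `n` lies in `I`. -/
def HasRegularSeq {R : Type*} [CommRing R] (I : Ideal R) (M : Type*) [AddCommGroup M] [Module R M]
    (n : ℕ) : Prop :=
  ∃ rs : List R, rs.length = n ∧ (∀ r ∈ rs, r ∈ I) ∧ IsRegular M rs

section General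

variable {R M : Type*} [CommRing R] [AddCommGroup M] [Module R M] {I : Ideal R} {n : ℕ}

lemma HasRegularSeq.nontrivial (h : HasRegularSeq I M n) : Nontrivial M :=
  let ⟨_, _, _, hreg⟩ := h
  hreg.nontrivial

lemma HasRegularSeq.congr {M' : Type*} [AddCommGroup M'] [Module R M'] (e : M ≃ₗ[R] M')
    (h : HasRegularSeq I M n) : HasRegularSeq I M' n := by
  obtain ⟨rs, hlen, hmem, hreg⟩ := h
  exact ⟨rs, hlen, hmem, (e.isRegular_congr rs).1 hreg⟩

lemma smul_top_quotient_ne_top (hI : I • (⊤ : Submodule R M) ≠ ⊤)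
    {N : Submodule R M} (hN : N ≤ I • ⊤) : I • (⊤ : Submodule R (M ⧸ N)) ≠ ⊤ := by
  rwa [← N.range_mkQ, ← Submodule.map_top, ← Submodule.map_smul'', Submodule.map_top,
    N.range_mkQ, ne_eq, Submodule.map_mkQ_eq_top, sup_eq_right.2 hN]

lemma smul_top_le_ideal_smul_top {x : R} (hx : x ∈ I) : x • (⊤ : Submodule R M) ≤ I • ⊤ := by
  rw [← Submodule.ideal_span_singleton_smul]
  exact Submodule.smul_mono_left ((Ideal.span_singleton_le_iff_mem I).2 hx)

lemma support_quotient_eq_zeroLocus (I : Ideal R) :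
    Module.support R (R ⧸ I) = PrimeSpectrum.zeroLocus I := by
  rw [Module.support_eq_zeroLocus, Ideal.annihilator_quotient]

end General

namespace HasRegularSeq

universe u

variable {R M : Type u} [CommRing R] [IsNoetherianRing R] [AddCommGroup M] [Module R M]
  [Module.Finite R M] {I J : Ideal R} {n : ℕ}

lemma subsingleton_ext (hI : I • (⊤ : Submodule R M) ≠ ⊤) (h : HasRegularSeq I M n)
    (N : ModuleCat.{u} R) [Module.Finite R N]
    (hN : Module.support R N ⊆ PrimeSpectrum.zeroLocus I) {i : ℕ} (hi : i < n) :
    Subsingleton (Ext N (.of R M) i) := by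
  obtain ⟨rs, rfl, hmem, hreg⟩ := h
  exact ModuleCat.subsingleton_ext_of_exists_isRegular I N hN (.of R M) hI.lt_top rs hmem hreg i hi

lemma of_subsingleton_ext (hI : I • (⊤ : Submodule R M) ≠ ⊤)
    (h : ∀ i < n, Subsingleton (Ext (ModuleCat.of R (R ⧸ I)) (.of R M) i)) :
    HasRegularSeq I M n :=
  ModuleCat.exists_isRegular_of_exists_subsingleton_ext I n (.of R M) hI.lt_top
    (.of R (R ⧸ I)) (support_quotient_eq_zeroLocus I) h

lemma of_le_radical (hIJ : I ≤ J.radical)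
    (hI : I • (⊤ : Submodule R M) ≠ ⊤) (hJ : J • (⊤ : Submodule R M) ≠ ⊤)
    (h : HasRegularSeq I M n) : HasRegularSeq J M n := by
  refine of_subsingleton_ext hJ fun i hi => h.subsingleton_ext hI _ ?_ hi
  refine (support_quotient_eq_zeroLocus J).trans_subset ?_
  rwa [PrimeSpectrum.zeroLocus_subset_zeroLocus_iff]

lemma quotSMulTop (hI : I • (⊤ : Submodule R M) ≠ ⊤) {x : R} (hx : x ∈ I)
    (hreg : IsSMulRegular M x) (h : HasRegularSeq I M (n + 1)) :
    HasRegularSeq I (QuotSMulTop x M) n := by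
  refine of_subsingleton_ext (smul_top_quotient_ne_top hI (smul_top_le_ideal_smul_top hx))
    fun i hi => ?_
  have ext_isZero {j : ℕ} (hj : j < n + 1) := AddCommGrpCat.isZero_of_iff_subsingleton.2 <|
    h.subsingleton_ext hI (.of R (R ⧸ I)) (support_quotient_eq_zeroLocus I).subset hj
  exact AddCommGrpCat.subsingleton_of_isZero <|
    (Ext.covariant_sequence_exact₃' (.of R (R ⧸ I))
      (IsSMulRegular.smulShortComplex_shortExact (M := .of R M) hreg) i (i + 1)
      rfl).isZero_of_both_zeros
    ((ext_isZero (by lia)).eq_zero_of_src _) ((ext_isZero (by lia)).eq_zero_of_tgt _)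

lemma quotient_ofList (hI : I • (⊤ : Submodule R M) ≠ ⊤) {rs : List R}
    (hrs : ∀ r ∈ rs, r ∈ I) (hreg : IsWeaklyRegular M rs)
    (h : HasRegularSeq I M (n + rs.length)) :
    HasRegularSeq I (M ⧸ (Ideal.ofList rs • ⊤ : Submodule R M)) n := by
  induction rs generalizing M with
  | nil =>
    refine h.congr (Submodule.quotEquivOfEqBot _ ?_).symm
    rw [Ideal.ofList_nil, Submodule.bot_smul]
  | cons r rs ih =>
    rw [isWeaklyRegular_cons_iff] at hreg
    rw [List.forall_mem_cons] at hrs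
    refine HasRegularSeq.congr
      (Submodule.quotOfListConsSMulTopEquivQuotSMulTopInner M r rs).symm ?_
    exact ih (smul_top_quotient_ne_top hI (smul_top_le_ideal_smul_top hrs.1)) hrs.2 hreg.2
      (h.quotSMulTop hI hrs.1 hreg.1)

lemma quotient_map_ofList {B : Type*} [CommRing B] [Algebra B R] (hI : I ≠ ⊤) {rs : List B}
    (hrs : ∀ r ∈ rs, algebraMap B R r ∈ I) (hreg : IsWeaklyRegular R rs)
    (h : HasRegularSeq I R (n + rs.length)) :
    HasRegularSeq I (R ⧸ (Ideal.ofList rs).map (algebraMap B R)) n := by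
  have hquot : HasRegularSeq I
      (R ⧸ (Ideal.ofList (rs.map (algebraMap B R)) • ⊤ : Submodule R R)) n :=
    quotient_ofList (by rwa [smul_eq_mul, Ideal.mul_top]) (List.forall_mem_map.2 hrs)
      ((isWeaklyRegular_map_algebraMap_iff R R rs).2 hreg) (by rwa [List.length_map])
  rwa [smul_eq_mul, Ideal.mul_top, ← Ideal.map_ofList] at hquot

end HasRegularSeq

end RegularSequences

/-! ### Grade over a graded algebra -/

section Torsion

open Polynomial RingTheory.Sequence
open scoped Pointwise

variable {R M : Type*} [CommRing R] [AddCommGroup M] [Module R M]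

-- On the torsion, `x` and `s` act as `c y` and `d y`. For `z` in it, `s c z = x d z` lies in `x M`,
-- so that `c z = x w` for some `w`, and then `x y w = y c z = x z` gives `z = y w`.
lemma torsionBySet_le_smul_torsionBySet {I : Ideal R} {x y s : R} (hx : x ∈ I ⊔ Ideal.span {y})
    (hs : s ∈ I ⊔ Ideal.span {y}) (hxM : IsSMulRegular M x)
    (hsM : IsSMulRegular (QuotSMulTop x M) s) :
    Submodule.torsionBySet R M I ≤ y • Submodule.torsionBySet R M I := by
  have smul_eq {r : R} (hr : r ∈ I ⊔ Ideal.span {y}) :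
      ∃ c : R, ∀ z ∈ Submodule.torsionBySet R M I, r • z = c • y • z := by
    obtain ⟨r', hr', q, hq, rfl⟩ := Submodule.mem_sup.1 hr
    obtain ⟨c, rfl⟩ := Ideal.mem_span_singleton'.1 hq
    refine ⟨c, fun z hz => ?_⟩
    rw [add_smul, (Submodule.mem_torsionBySet_iff _ _).1 hz ⟨r', hr'⟩, zero_add, mul_smul]
  obtain ⟨c, hc⟩ := smul_eq hx
  obtain ⟨d, hd⟩ := smul_eq hs
  intro z hz
  have hcz : s • c • z ∈ x • (⊤ : Submodule R M) := by
    rw [hd _ (Submodule.smul_mem _ c hz), smul_comm y c, ← hc z hz, smul_comm d x]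
    exact Submodule.smul_mem_pointwise_smul _ _ _ trivial
  obtain ⟨w, -, hw⟩ := (Submodule.mem_smul_pointwise_iff_exists _ _ _).1 <|
    mem_of_isSMulRegular_quotient_of_smul_mem hsM hcz
  refine (Submodule.mem_smul_pointwise_iff_exists _ _ _).2 ⟨w, ?_, hxM ?_⟩
  · refine (Submodule.mem_torsionBySet_iff _ _).2 fun b => hxM.right_eq_zero_of_smul ?_
    rw [smul_comm, hw, smul_comm, (Submodule.mem_torsionBySet_iff _ _).1 hz b, smul_zero]
  · change x • y • w = x • z
    rw [smul_comm, hw, hc z hz, smul_comm]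

lemma eq_bot_of_le_smul {y : R} {S : Type*} [CommRing S] (φ : M →+ S[X]) (hφ : Function.Injective φ)
    {p : S[X]} (hp : X ∣ p) (hφy : ∀ z, φ (y • z) = p * φ z) {N : Submodule R M}
    (hN : N ≤ y • N) : N = ⊥ := by
  have X_pow_dvd (n : ℕ) : ∀ z ∈ N, X ^ n ∣ φ z := by
    induction n with
    | zero => exact fun z _ => pow_zero (X : S[X]) ▸ one_dvd _
    | succ n ih =>
      intro z hz
      obtain ⟨w, hw, rfl⟩ := (Submodule.mem_smul_pointwise_iff_exists _ _ _).1 (hN hz)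
      rw [hφy, pow_succ']
      exact mul_dvd_mul hp (ih w hw)
  refine (Submodule.eq_bot_iff N).2 fun z hz => hφ ?_
  ext n
  rw [map_zero, coeff_zero, X_pow_dvd_iff.1 (X_pow_dvd (n + 1) z hz) n n.lt_succ_self]

lemma exists_isSMulRegular_algebraMap {B : Type*} [CommRing B] [Algebra B R] [IsNoetherianRing R]
    [Module.Finite R M] {I : Ideal B}
    (h : Submodule.torsionBySet R M (I.map (algebraMap B R)) = ⊥) :
    ∃ r ∈ I, IsSMulRegular M (algebraMap B R r) := by
  by_contra! hcon
  have hsub : (I : Set B) ⊆ ⋃ P ∈ associatedPrimes R M, P.comap (algebraMap B R) := by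
    intro r hr
    have hmem : algebraMap B R r ∉ (⋃ P ∈ associatedPrimes R M, (P : Set R))ᶜ := by
      rw [biUnion_associatedPrimes_eq_compl_regular, compl_compl]
      exact hcon r hr
    simpa using hmem
  obtain ⟨P, hP, hIP⟩ := (Ideal.subset_union_prime_finite (associatedPrimes.finite R M)
    (f := Ideal.comap (algebraMap B R)) ⊥ ⊥ fun P hP _ _ => hP.isPrime.comap _).1 hsub
  obtain ⟨hP, z, rfl⟩ := isAssociatedPrime_iff.1 hP
  rw [← Ideal.map_le_iff_le_comap] at hIP
  have hz : z ∈ Submodule.torsionBySet R M (I.map (algebraMap B R)) := by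
    refine (Submodule.mem_torsionBySet_iff _ _).2 fun a => ?_
    exact (Submodule.mem_bot R).1 (Submodule.mem_colon_singleton.1 (hIP a.2))
  rw [h, Submodule.mem_bot] at hz
  exact hP.ne_top (by simp [hz])

end Torsion

section Graded

open Polynomial RingTheory.Sequence

universe u

variable {A : Type u} {B : Type*} [CommRing A] [CommRing B] [Algebra B A] {I : Ideal B} {y : A}
  {n : ℕ}

lemma map_mk_coaction_eq_zero (φ : A →ₐ[B] A[X]) {𝔟 : Ideal B} {a : A}
    (ha : a ∈ 𝔟.map (algebraMap B A)) :
    (φ a).map (Ideal.Quotient.mk (𝔟.map (algebraMap B A))) = 0 := by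
  let ψ := (mapRingHom (Ideal.Quotient.mk (𝔟.map (algebraMap B A)))).comp (φ : A →+* A[X])
  have hle : 𝔟.map (algebraMap B A) ≤ RingHom.ker ψ := Ideal.map_le_iff_le_comap.2 fun b hb => by
    have hb' := Ideal.Quotient.eq_zero_iff_mem.2 (Ideal.mem_map_of_mem (algebraMap B A) hb)
    simp [ψ, RingHom.mem_ker, Polynomial.algebraMap_apply, hb']
  exact hle ha

/-- A grading of `A` over `B`, in the form of a coaction `φ : A → A[X]`, descends to `A / 𝔟A`. -/
noncomputable def quotientCoaction (φ : A →ₐ[B] A[X]) (𝔟 : Ideal B) :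
    A ⧸ 𝔟.map (algebraMap B A) →ₐ[B] (A ⧸ 𝔟.map (algebraMap B A))[X] :=
  Ideal.Quotient.liftₐ _ ((mapAlgHom (Ideal.Quotient.mkₐ B (𝔟.map (algebraMap B A)))).comp φ)
    fun _ => map_mk_coaction_eq_zero φ

lemma quotientCoaction_mk (φ : A →ₐ[B] A[X]) (𝔟 : Ideal B) (a : A) :
    quotientCoaction φ 𝔟 (Ideal.Quotient.mk _ a) = (φ a).map (Ideal.Quotient.mk _) := rfl

lemma torsionBySet_quotient_eq_bot (φ : A →ₐ[B] A[X]) (hφ : ∀ a, (φ a).eval 1 = a)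
    (hy : X ∣ φ y) {𝔟 : Ideal B}
    (h : HasRegularSeq (I.map (algebraMap B A) ⊔ Ideal.span {y})
      (A ⧸ 𝔟.map (algebraMap B A)) (n + 2)) :
    Submodule.torsionBySet A (A ⧸ 𝔟.map (algebraMap B A)) (I.map (algebraMap B A)) = ⊥ := by
  have eval_coaction : Function.LeftInverse (eval 1) (quotientCoaction φ 𝔟) := by
    rw [Function.LeftInverse, Ideal.Quotient.mk_surjective.forall]
    intro a
    rw [quotientCoaction_mk, eval_one_map, hφ]
  obtain ⟨_ | ⟨x, _ | ⟨s, rs⟩⟩, hlen, hmem, hreg⟩ := h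
  · simp at hlen
  · simp at hlen
  replace hreg := hreg.toIsWeaklyRegular
  rw [isWeaklyRegular_cons_iff, isWeaklyRegular_cons_iff] at hreg
  have coaction_smul (z) : quotientCoaction φ 𝔟 (y • z) =
      (φ y).map (Ideal.Quotient.mk _) * quotientCoaction φ 𝔟 z := by
    rw [Algebra.smul_def, map_mul, Ideal.Quotient.algebraMap_eq, quotientCoaction_mk]
  have X_dvd : X ∣ (φ y).map (Ideal.Quotient.mk (𝔟.map (algebraMap B A))) := by
    simpa using map_dvd (mapRingHom (Ideal.Quotient.mk (𝔟.map (algebraMap B A)))) hy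
  exact eq_bot_of_le_smul (quotientCoaction φ 𝔟).toRingHom.toAddMonoidHom
    eval_coaction.injective X_dvd coaction_smul <|
    torsionBySet_le_smul_torsionBySet (hmem x (by simp)) (hmem s (by simp)) hreg.1 hreg.2.1

lemma exists_isWeaklyRegular_of_coaction [IsNoetherianRing A] (φ : A →ₐ[B] A[X])
    (hφ : ∀ a, (φ a).eval 1 = a) (hy : X ∣ φ y)
    (htop : I.map (algebraMap B A) ⊔ Ideal.span {y} ≠ ⊤)
    (h : HasRegularSeq (I.map (algebraMap B A) ⊔ Ideal.span {y}) A (n + 1)) {m : ℕ} (hm : m ≤ n) :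
    ∃ rs : List B, rs.length = m ∧ (∀ r ∈ rs, r ∈ I) ∧ IsWeaklyRegular A rs := by
  induction m with
  | zero => exact ⟨[], rfl, by simp, .nil B A⟩
  | succ m ih =>
    obtain ⟨rs, rfl, hmem, hreg⟩ := ih (by lia)
    obtain ⟨j, rfl⟩ := Nat.exists_eq_add_of_le hm
    have hquot : HasRegularSeq (I.map (algebraMap B A) ⊔ Ideal.span {y})
        (A ⧸ (Ideal.ofList rs).map (algebraMap B A)) (j + 2) :=
      .quotient_map_ofList htop
        (fun r hr => Ideal.mem_sup_left (Ideal.mem_map_of_mem _ (hmem r hr))) hreg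
        (by convert h using 1; lia)
    obtain ⟨r, hr, hrreg⟩ := exists_isSMulRegular_algebraMap
      (torsionBySet_quotient_eq_bot φ hφ hy hquot)
    refine ⟨rs ++ [r], by simp, List.forall_mem_append.2 ⟨hmem, by simpa using hr⟩, ?_⟩
    rw [← isWeaklyRegular_map_algebraMap_iff A] at hreg ⊢
    rw [List.map_append, isWeaklyRegular_append_iff, List.map_singleton,
      isWeaklyRegular_singleton_iff, ← Ideal.map_ofList, smul_eq_mul, Ideal.mul_top]
    exact ⟨hreg, hrreg⟩

end Graded

/-! ### Retracts and depth -/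

section Depth

open RingTheory.Sequence

lemma isWeaklyRegular_of_leftInverse {R M N : Type*} [CommRing R] [AddCommGroup M] [Module R M]
    [AddCommGroup N] [Module R N] {i : N →ₗ[R] M} {p : M →ₗ[R] N} (hpi : p ∘ₗ i = .id) {rs : List R}
    (h : IsWeaklyRegular M rs) : IsWeaklyRegular N rs := by
  induction rs generalizing M N with
  | nil => exact .nil R N
  | cons r rs ih =>
    rw [isWeaklyRegular_cons_iff] at h ⊢
    refine ⟨h.1.of_injective i (LinearMap.injective_of_comp_eq_id i p hpi),
      ih (i := QuotSMulTop.map r i) (p := QuotSMulTop.map r p) ?_ h.2⟩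
    rw [← QuotSMulTop.map_comp, hpi, QuotSMulTop.map_id]

section Height

variable {R : Type*} [CommRing R] {I : Ideal R}

lemma isRegular_self_of_isWeaklyRegular (hI : I ≠ ⊤) {rs : List R} (hrs : ∀ r ∈ rs, r ∈ I)
    (h : IsWeaklyRegular R rs) : IsRegular R rs := by
  refine ⟨h, fun htop => hI (top_unique ?_)⟩
  rw [htop, smul_eq_mul, Ideal.mul_top]
  exact Ideal.span_le.2 hrs

lemma length_le_height_of_isWeaklyRegular [IsNoetherianRing R] {P : Ideal R} [P.IsPrime]
    {rs : List R} (hrs : ∀ r ∈ rs, r ∈ P) (h : IsWeaklyRegular R rs) : rs.length ≤ P.height := by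
  let S := Localization.AtPrime P
  have hS : IsRegular S (rs.map (algebraMap R S)) := h.isRegular_of_isLocalization_of_mem S P hrs
  have : Nontrivial (S ⧸ Ideal.ofList (rs.map (algebraMap R S))) :=
    Ideal.Quotient.nontrivial_iff.2 fun htop =>
      hS.top_ne_smul (by rw [htop, smul_eq_mul, Ideal.mul_top])
  have hdim := ringKrullDim_add_length_eq_ringKrullDim_of_isRegular _ hS
  rw [IsLocalization.AtPrime.ringKrullDim_eq_height P S, List.length_map] at hdim
  have hle : (rs.length : WithBot ℕ∞) ≤ P.height :=
    hdim ▸ le_add_of_nonneg_left ringKrullDim_nonneg_of_nontrivial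
  exact_mod_cast hle

lemma bddAbove_hasRegularSeq [IsNoetherianRing R] (hI : I ≠ ⊤) :
    BddAbove {n | HasRegularSeq I R n} := by
  obtain ⟨P, hP, hIP⟩ := Ideal.exists_le_maximal I hI
  refine ⟨P.height.toNat, ?_⟩
  rintro _ ⟨rs, rfl, hrs, hreg⟩
  rw [← ENat.natCast_le_natCast, ENat.natCast_toNat (Ideal.height_ne_top hP.ne_top)]
  exact length_le_height_of_isWeaklyRegular (fun r hr => hIP (hrs r hr)) hreg.toIsWeaklyRegular

end Height

variable {R : Type} [CommRing R] {I : Ideal R}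

lemma le_depthIn [IsNoetherianRing R] (hI : I ≠ ⊤) {rs : List R} (hrs : ∀ r ∈ rs, r ∈ I)
    (h : IsWeaklyRegular R rs) : rs.length ≤ depthIn R I :=
  le_csSup (bddAbove_hasRegularSeq hI) ⟨rs, rfl, hrs, isRegular_self_of_isWeaklyRegular hI hrs h⟩

-- The supremum `depthIn R I` takes the junk value `0` when it is not attained.
lemma hasRegularSeq_depthIn (h : depthIn R I ≠ 0) : HasRegularSeq I R (depthIn R I) := by
  refine Nat.sSup_mem (s := {n | HasRegularSeq I R n}) ?_ ?_
  · refine Set.nonempty_iff_ne_empty.2 fun h₀ => h ?_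
    exact (congrArg sSup h₀).trans csSup_empty
  · by_contra h₀
    exact h (Nat.sSup_of_not_bddAbove h₀)

end Depth

/-! ### Stanley–Reisner rings of anti-stars -/

namespace SComplex

variable {V : Type} [DecidableEq V] (k : Type) [Field k] (K : SComplex V)

/-- The class of the variable `v` in the Stanley–Reisner ring. -/
noncomputable def srVar (v : V) : SRRing k K := Ideal.Quotient.mk (srIdeal k K) (MvPolynomial.X v)

/-- The irrelevant ideal of the Stanley–Reisner ring. -/
noncomputable def srIrrelevant : Ideal (SRRing k K) := Ideal.span (Set.range (srVar k K))

variable {K}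

lemma prod_srVar_eq_zero {s : Finset V} (hs : s ∉ K.faces) : ∏ v ∈ s, srVar k K v = 0 := by
  simp only [srVar, ← map_prod]
  exact Ideal.Quotient.eq_zero_iff_mem.2 (Ideal.subset_span ⟨s, hs, rfl⟩)

variable {k}

/-- The universal property of the Stanley–Reisner ring. -/
noncomputable def srLift {S : Type*} [CommRing S] [Algebra k S] (f : V → S)
    (h : ∀ s : Finset V, s ∉ K.faces → ∏ v ∈ s, f v = 0) : SRRing k K →ₐ[k] S :=
  Ideal.Quotient.liftₐ (srIdeal k K) (MvPolynomial.aeval f) fun a ha => by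
    have hle : srIdeal k K ≤ RingHom.ker (MvPolynomial.aeval f : MvPolynomial V k →ₐ[k] S) := by
      refine Ideal.span_le.2 ?_
      rintro _ ⟨s, hs, rfl⟩
      simpa [RingHom.mem_ker, map_prod] using h s hs
    exact hle ha

@[simp]
lemma srLift_srVar {S : Type*} [CommRing S] [Algebra k S] (f : V → S)
    (h : ∀ s : Finset V, s ∉ K.faces → ∏ v ∈ s, f v = 0) (v : V) :
    srLift (k := k) f h (srVar k K v) = f v := by
  change MvPolynomial.aeval f (MvPolynomial.X v) = f v
  simp

lemma srRing_algHom_ext {S : Type*} [CommRing S] [Algebra k S] {f g : SRRing k K →ₐ[k] S}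
    (h : ∀ v, f (srVar k K v) = g (srVar k K v)) : f = g :=
  Ideal.Quotient.algHom_ext _ (MvPolynomial.algHom_ext h)

lemma finite_range_srVar : (Set.range (srVar k K)).Finite := by
  refine ((Set.finite_singleton 0).union
    ((K.faces.sup id).finite_toSet.image (srVar k K))).subset ?_
  rintro _ ⟨v, rfl⟩
  by_cases hv : {v} ∈ K.faces
  · exact Or.inr ⟨v, Finset.mem_sup.2 ⟨{v}, hv, Finset.mem_singleton_self v⟩, rfl⟩
  · exact Or.inl (by simpa using prod_srVar_eq_zero k hv)

lemma adjoin_range_srVar : Algebra.adjoin k (Set.range (srVar k K)) = ⊤ := by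
  have range_srVar : Set.range (srVar k K) =
      Ideal.Quotient.mkₐ k (srIdeal k K) '' Set.range MvPolynomial.X := by
    rw [← Set.range_comp]
    rfl
  rw [range_srVar, ← AlgHom.map_adjoin, MvPolynomial.adjoin_range_X, Algebra.map_top,
    AlgHom.range_eq_top]
  exact Ideal.Quotient.mkₐ_surjective k _

-- The vertex type may be infinite, but only finitely many variables are nonzero in `k[Δ]`.
instance isNoetherianRing_srRing : IsNoetherianRing (SRRing k K) :=
  have : Algebra.FiniteType k (SRRing k K) :=
    ⟨adjoin_range_srVar (k := k) (K := K) ▸ Subalgebra.fg_def.2 ⟨_, finite_range_srVar, rfl⟩⟩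
  Algebra.FiniteType.isNoetherianRing k _

lemma srVar_mem_srIrrelevant (v : V) : srVar k K v ∈ srIrrelevant k K :=
  Ideal.subset_span ⟨v, rfl⟩

lemma srIrrelevant_ne_top (h : ∅ ∈ K.faces) : srIrrelevant k K ≠ ⊤ := by
  let ε : SRRing k K →ₐ[k] k := srLift (fun _ => 0) fun s hs => by
    obtain ⟨v, hv⟩ : s.Nonempty := Finset.nonempty_iff_ne_empty.2 fun h0 => hs (h0 ▸ h)
    exact Finset.prod_eq_zero hv rfl
  have hle : srIrrelevant k K ≤ RingHom.ker ε := by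
    refine Ideal.span_le.2 ?_
    rintro _ ⟨v, rfl⟩
    exact srLift_srVar _ _ v
  exact fun htop => RingHom.ker_ne_top ε (top_unique (htop ▸ hle))

lemma empty_mem_faces_of_nontrivial [Nontrivial (SRRing k K)] : ∅ ∈ K.faces := by
  by_contra h
  simpa using prod_srVar_eq_zero k h

lemma mem_antistar_faces {J s : Finset V} :
    s ∈ (K.antistar J).faces ↔ s ∈ K.faces ∧ Disjoint J s := Finset.mem_filter

lemma srVar_antistar_eq_zero {J : Finset V} {v : V} (hv : v ∈ J) :
    srVar k (K.antistar J) v = 0 := by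
  have h : {v} ∉ (K.antistar J).faces := fun h =>
    Finset.disjoint_left.1 (mem_antistar_faces.1 h).2 hv (Finset.mem_singleton_self v)
  simpa using prod_srVar_eq_zero k h

variable (k K)

/-- The inclusion of the Stanley–Reisner ring of an anti-star. -/
noncomputable def antistarInclusion (J : Finset V) : SRRing k (K.antistar J) →ₐ[k] SRRing k K :=
  srLift (fun v => if v ∈ J then 0 else srVar k K v) fun s hs => by
    by_cases hJ : ∃ v ∈ s, v ∈ J
    · obtain ⟨v, hv, hvJ⟩ := hJ
      exact Finset.prod_eq_zero hv (if_pos hvJ)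
    · push Not at hJ
      have hs' : s ∉ K.faces := fun h =>
        hs (mem_antistar_faces.2 ⟨h, Finset.disjoint_right.2 hJ⟩)
      rw [Finset.prod_congr rfl fun v hv => if_neg (hJ v hv), prod_srVar_eq_zero k hs']

noncomputable instance (J : Finset V) : Algebra (SRRing k (K.antistar J)) (SRRing k K) :=
  (antistarInclusion k K J).toAlgebra

instance (J : Finset V) : IsScalarTower k (SRRing k (K.antistar J)) (SRRing k K) :=
  .of_algebraMap_eq fun c => ((antistarInclusion k K J).commutes c).symm

variable {k K} {J : Finset V} {v : V}

lemma algebraMap_antistar_srVar (hv : v ∉ J) :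
    algebraMap (SRRing k (K.antistar J)) (SRRing k K) (srVar k (K.antistar J) v) = srVar k K v :=
  (srLift_srVar _ _ v).trans (if_neg hv)

/-- The universal property of `k[Δ]` as an algebra over `k[ast_Δ(J)]`. -/
noncomputable def antistarLift {S : Type*} [CommRing S] [Algebra k S]
    [Algebra (SRRing k (K.antistar J)) S] [IsScalarTower k (SRRing k (K.antistar J)) S]
    (f : V → S) (h : ∀ s : Finset V, s ∉ K.faces → ∏ v ∈ s, f v = 0)
    (hf : ∀ v ∉ J, f v = algebraMap (SRRing k (K.antistar J)) S (srVar k (K.antistar J) v)) :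
    SRRing k K →ₐ[SRRing k (K.antistar J)] S where
  __ := srLift (k := k) f h
  commutes' := by
    refine DFunLike.congr_fun (srRing_algHom_ext (f := (srLift f h).comp (antistarInclusion k K J))
      (g := IsScalarTower.toAlgHom k _ S) fun v => ?_)
    by_cases hv : v ∈ J
    · simp [srVar_antistar_eq_zero hv]
    · simp [antistarInclusion, hv, hf]

@[simp]
lemma antistarLift_srVar {S : Type*} [CommRing S] [Algebra k S]
    [Algebra (SRRing k (K.antistar J)) S] [IsScalarTower k (SRRing k (K.antistar J)) S]
    (f : V → S) (h : ∀ s : Finset V, s ∉ K.faces → ∏ v ∈ s, f v = 0)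
    (hf : ∀ v ∉ J, f v = algebraMap (SRRing k (K.antistar J)) S (srVar k (K.antistar J) v))
    (v : V) : antistarLift f h hf (srVar k K v) = f v :=
  srLift_srVar f h v

variable (k K J)

/-- The restriction `k[Δ] → k[ast_Δ(J)]`, which kills the variables in `J`. -/
noncomputable def antistarRestriction :
    SRRing k K →ₐ[SRRing k (K.antistar J)] SRRing k (K.antistar J) :=
  antistarLift (srVar k (K.antistar J))
    (fun _ hs => prod_srVar_eq_zero k fun h => hs (mem_antistar_faces.1 h).1) fun _ _ => rfl

/-- The grading of `k[Δ]` by the degree in the variables from `J`, as the coaction sending an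
element `f` of degree `d` to `f X ^ d`. -/
noncomputable def degreeCoaction :
    SRRing k K →ₐ[SRRing k (K.antistar J)] Polynomial (SRRing k K) :=
  antistarLift (fun v => Polynomial.C (srVar k K v) * if v ∈ J then Polynomial.X else 1)
    (fun s hs => by
      rw [Finset.prod_mul_distrib, ← map_prod, prod_srVar_eq_zero k hs, map_zero, zero_mul])
    fun v hv => by
      rw [if_neg hv, mul_one, Polynomial.algebraMap_apply, algebraMap_antistar_srVar hv]

variable {K J}

lemma eval_one_degreeCoaction (f : SRRing k K) : (degreeCoaction k K J f).eval 1 = f := by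
  let ev : Polynomial (SRRing k K) →ₐ[k] SRRing k K := (Polynomial.aeval 1).restrictScalars k
  have h : ev.comp ((degreeCoaction k K J).restrictScalars k) = AlgHom.id k _ := by
    refine srRing_algHom_ext fun v => ?_
    by_cases hv : v ∈ J <;> simp [ev, degreeCoaction, hv]
  simpa [ev, Polynomial.coe_aeval_eq_eval] using DFunLike.congr_fun h f

lemma X_dvd_degreeCoaction_sum :
    Polynomial.X ∣ degreeCoaction k K J (∑ a ∈ J, srVar k K a) := by
  rw [map_sum]
  refine Finset.dvd_sum fun v hv => Dvd.intro_left (Polynomial.C (srVar k K v)) ?_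
  simp [degreeCoaction, hv]

variable (K J)

/-- The ideal of `k[Δ]` generated by the variables outside `J` and the sum of those in `J`. -/
noncomputable def antistarSumIdeal : Ideal (SRRing k K) :=
  (srIrrelevant k (K.antistar J)).map (algebraMap _ (SRRing k K)) ⊔
    Ideal.span {∑ a ∈ J, srVar k K a}

lemma antistarSumIdeal_le_srIrrelevant : antistarSumIdeal k K J ≤ srIrrelevant k K := by
  refine sup_le ?_ <| (Ideal.span_singleton_le_iff_mem _).2 <|
    sum_mem fun a _ => srVar_mem_srIrrelevant a
  rw [srIrrelevant, Ideal.map_span, Ideal.span_le]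
  rintro _ ⟨_, ⟨v, rfl⟩, rfl⟩
  by_cases hv : v ∈ J
  · simp [srVar_antistar_eq_zero hv]
  · simpa [algebraMap_antistar_srVar hv] using srVar_mem_srIrrelevant v

variable {K J}

lemma srIrrelevant_le_radical_antistarSumIdeal
    (hindep : ∀ a ∈ J, ∀ b ∈ J, a ≠ b → ({a, b} : Finset V) ∉ K.faces) :
    srIrrelevant k K ≤ (antistarSumIdeal k K J).radical := by
  refine Ideal.span_le.2 ?_
  rintro _ ⟨v, rfl⟩
  by_cases hv : v ∈ J
  · have sum_mul_srVar : (∑ a ∈ J, srVar k K a) * srVar k K v = srVar k K v ^ 2 := by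
      rw [Finset.sum_mul, sq]
      refine Finset.sum_eq_single_of_mem v hv fun a ha hav => ?_
      simpa [Finset.prod_pair hav] using prod_srVar_eq_zero k (hindep a ha v hv hav)
    refine ⟨2, Ideal.mem_sup_right ?_⟩
    rw [← sum_mul_srVar]
    exact Ideal.mul_mem_right _ _ (Ideal.mem_span_singleton_self _)
  · refine Ideal.le_radical (Ideal.mem_sup_left ?_)
    rw [← algebraMap_antistar_srVar hv]
    exact Ideal.mem_map_of_mem _ (srVar_mem_srIrrelevant v)

end SComplex

/-- If `J ⊆ V(Δ)` is an independent set of vertices for `Δ`, then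
`depth k[ast_Δ(J)] ≥ depth k[Δ] - 1`. -/
theorem antistar_depth {V : Type} [DecidableEq V] (k : Type) [Field k] (K : SComplex V)
    (J : Finset V)
    (hJV : ∀ a ∈ J, ({a} : Finset V) ∈ K.faces)
    (hindep : ∀ a ∈ J, ∀ b ∈ J, a ≠ b → ({a, b} : Finset V) ∉ K.faces) :
    SComplex.srDepth k K - 1 ≤ SComplex.srDepth k (K.antistar J) := by
  rcases hd : SComplex.srDepth k K with _ | n
  · exact Nat.zero_le _
  have hseq : HasRegularSeq (SComplex.srIrrelevant k K) (SComplex.SRRing k K) (n + 1) :=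
    hd ▸ hasRegularSeq_depthIn (hd.trans_ne n.succ_ne_zero)
  have := hseq.nontrivial
  have hempty : ∅ ∈ K.faces := SComplex.empty_mem_faces_of_nontrivial (k := k)
  have hempty' : ∅ ∈ (K.antistar J).faces :=
    SComplex.mem_antistar_faces.2 ⟨hempty, Finset.disjoint_empty_right J⟩
  have hne := SComplex.srIrrelevant_ne_top (k := k) hempty
  have hne' := ne_top_of_le_ne_top hne (SComplex.antistarSumIdeal_le_srIrrelevant k K J)
  have hseq' : HasRegularSeq (SComplex.antistarSumIdeal k K J) (SComplex.SRRing k K) (n + 1) :=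
    hseq.of_le_radical (SComplex.srIrrelevant_le_radical_antistarSumIdeal k hindep)
      (by simpa) (by simpa)
  obtain ⟨rs, rfl, hmem, hreg⟩ := exists_isWeaklyRegular_of_coaction
    (SComplex.degreeCoaction k K J) (SComplex.eval_one_degreeCoaction k)
    (SComplex.X_dvd_degreeCoaction_sum k) hne' hseq' le_rfl
  exact le_depthIn (SComplex.srIrrelevant_ne_top hempty') hmem <|
    isWeaklyRegular_of_leftInverse (i := Algebra.linearMap _ _)
      (p := (SComplex.antistarRestriction k K J).toLinearMap)
      (LinearMap.ext (SComplex.antistarRestriction k K J).commutes) hreg
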